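/- The patterns 1342 and 2431 are not strongly 1-Wilf equivalent: for H = {2} and n = 5, the number of 1342-avoiding partial permutations of length 5 with hole set H is 13, while the number of 2431-avoiding ones is 14. Nevertheless, 1342 and 2431 are k-Wilf equivalent for every k (a partial permutation avoids 1342 iff its reverse avoids 2431). -/

import Mathlib

open Finset

/-- The word `σ` contains the pattern `p`: there is a subsequence of `σ`
order-isomorphic to `p`. -/
def ContainsPat {n ℓ : ℕ} {α β : Type*} [LinearOrder α] [LinearOrder β]
    (σ : Fin n → α) (p : Fin ℓ → β) : Prop :=
  ∃ g : Fin ℓ → Fin n, StrictMono g ∧ ∀ a b : Fin ℓ, σ (g a) < σ (g b) ↔ p a < p b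

/-- `σ ∈ S_n` is an extension of the partial permutation `π`: on the non-hole
positions, the relative order of the values of `σ` matches that of `π`. -/
def IsExtension {n : ℕ} {α : Type*} [LinearOrder α]
    (σ : Equiv.Perm (Fin n)) (π : Fin n → Option α) : Prop :=
  ∀ i j : Fin n, ∀ vi vj : α, π i = some vi → π j = some vj → (σ i < σ j ↔ vi < vj)

/-- The partial permutation `π` avoids the pattern `p`: every extension avoids `p`. -/
def PPAvoids {n ℓ : ℕ} {α β : Type*} [LinearOrder α] [LinearOrder β]
    (π : Fin n → Option α) (p : Fin ℓ → β) : Prop :=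
  ∀ σ : Equiv.Perm (Fin n), IsExtension σ π → ¬ ContainsPat (⇑σ) p

/-- `π` is a partial permutation of length `n` with `k` holes: each value of
`{1,…,n-k}` appears exactly once and there are exactly `k` holes. -/
def IsPPerm {n : ℕ} (k : ℕ) (π : Fin n → Option (Fin (n - k))) : Prop :=
  (Finset.univ.filter fun i => π i = none).card = k ∧
    ∀ v : Fin (n - k), ∃! i : Fin n, π i = some v

/-- `π` is a partial permutation whose holes are exactly at the positions in `H`. -/
def IsPPermH {n : ℕ} (H : Finset (Fin n)) (π : Fin n → Option (Fin (n - H.card))) : Prop :=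
  (∀ i, π i = none ↔ i ∈ H) ∧ ∀ v : Fin (n - H.card), ∃! i : Fin n, π i = some v

/-- `s_n^k(p)`: the number of `p`-avoiding partial permutations of length `n`
with `k` holes. -/
noncomputable def snk (n k : ℕ) {ℓ : ℕ} (p : Fin ℓ → Fin ℓ) : ℕ :=
  Nat.card {π : Fin n → Option (Fin (n - k)) // IsPPerm k π ∧ PPAvoids π p}

/-- `s_n^H(p)`: the number of `p`-avoiding partial permutations of length `n`
with hole set `H`. -/
noncomputable def snH {n ℓ : ℕ} (H : Finset (Fin n)) (p : Fin ℓ → Fin ℓ) : ℕ :=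
  Nat.card {π : Fin n → Option (Fin (n - H.card)) // IsPPermH H π ∧ PPAvoids π p}

/-- The number of permutations of length `m` avoiding the pattern `p`. -/
noncomputable def avoidCount (m : ℕ) {ℓ : ℕ} (p : Fin ℓ → Fin ℓ) : ℕ :=
  Nat.card {σ : Equiv.Perm (Fin m) // ¬ ContainsPat (⇑σ) p}

/-- `p` is a Baxter permutation: no indices `a < b < c = b+1 < d` such that
`(p a, p b, p c, p d)` is order-isomorphic to `2413` or `3142`. -/
def IsBaxter {ℓ : ℕ} (p : Fin ℓ → Fin ℓ) : Prop :=
  ¬ ∃ a b c d : Fin ℓ, a < b ∧ (b : ℕ) + 1 = (c : ℕ) ∧ c < d ∧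
    ((p c < p a ∧ p a < p d ∧ p d < p b) ∨ (p b < p d ∧ p d < p a ∧ p a < p c))

/-!
Reversing positions carries occurrences of `p` to occurrences of the reversed pattern and
extensions of `π` to extensions of the reversed `π`. It moves the holes, so it preserves the total
over all hole sets but need not preserve the count for a fixed one.

A partial permutation of length `n + 1` with its hole at `h` amounts to a permutation `τ` of
`Fin n`, and its extensions are obtained from `τ` by inserting one of the `n + 1` values at `h`. An
occurrence in a word of length `n + 1` of a pattern of length `n` omits exactly one position. For
`n = 4` this leaves five insertions and five omissions to inspect for each of the 24 choices of `τ`.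
-/

section Reversal

variable {n k ℓ : ℕ} {α β : Type*} [LinearOrder α] [LinearOrder β]

theorem ContainsPat.comp_rev {σ : Fin n → α} {p : Fin ℓ → β} (h : ContainsPat σ p) :
    ContainsPat (σ ∘ Fin.rev) (p ∘ Fin.rev) := by
  obtain ⟨g, hg, hiso⟩ := h
  refine ⟨Fin.rev ∘ g ∘ Fin.rev, (Fin.rev_strictAnti.comp_strictMono hg).comp Fin.rev_strictAnti,
    fun a b => ?_⟩
  simpa only [Function.comp_apply, Fin.rev_rev] using hiso a.rev b.rev

theorem containsPat_comp_rev_iff {σ : Fin n → α} {p : Fin ℓ → β} :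
    ContainsPat (σ ∘ Fin.rev) (p ∘ Fin.rev) ↔ ContainsPat σ p := by
  refine ⟨fun h => ?_, ContainsPat.comp_rev⟩
  simpa only [Function.comp_assoc, Fin.rev_involutive.comp_self, Function.comp_id] using h.comp_rev

theorem isExtension_mul_comp_iff (e σ : Equiv.Perm (Fin n)) (π : Fin n → Option α) :
    IsExtension (σ * e) (π ∘ e) ↔ IsExtension σ π :=
  e.forall_congr fun {_} => e.forall_congr fun {_} => Iff.rfl

theorem ppAvoids_comp_rev_iff {π : Fin n → Option α} {p : Fin ℓ → β} :
    PPAvoids (π ∘ Fin.rev) (p ∘ Fin.rev) ↔ PPAvoids π p :=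
  ((Equiv.mulRight Fin.revPerm).forall_congr fun {σ} =>
    imp_congr (isExtension_mul_comp_iff Fin.revPerm σ π).symm
      (not_congr containsPat_comp_rev_iff.symm)).symm

theorem isPPerm_comp_perm_iff (e : Equiv.Perm (Fin n)) {π : Fin n → Option (Fin (n - k))} :
    IsPPerm k (π ∘ e) ↔ IsPPerm k π := by
  have hcard : #{i | π (e i) = none} = #{i | π i = none} :=
    Finset.card_equiv e fun i => by simp only [mem_filter_univ]
  have hvalue (v : Fin (n - k)) : (∃! i, π (e i) = some v) ↔ ∃! i, π i = some v :=
    e.existsUnique_congr fun {_} => Iff.rfl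
  simp only [IsPPerm, Function.comp_apply, hcard, hvalue]

theorem snk_comp_rev (n k : ℕ) (p : Fin ℓ → Fin ℓ) : snk n k (p ∘ Fin.rev) = snk n k p :=
  (Nat.card_congr <| (Fin.revPerm.arrowCongr (Equiv.refl _)).subtypeEquiv fun _ =>
    and_congr (isPPerm_comp_perm_iff Fin.revPerm).symm ppAvoids_comp_rev_iff.symm).symm

end Reversal

section OneHole

variable {n ℓ : ℕ} {α β : Type*} [LinearOrder α] [LinearOrder β]

theorem exists_eq_succAbove_of_strictMono {g : Fin n → Fin (n + 1)} (hg : StrictMono g) :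
    ∃ m : Fin (n + 1), g = m.succAbove := by
  have hcard : #(univ.image g)ᶜ = 1 := by
    rw [card_compl, card_image_of_injective _ hg.injective, card_univ, Fintype.card_fin,
      Fintype.card_fin, Nat.add_sub_cancel_left]
  obtain ⟨m, hm⟩ := card_eq_one.mp hcard
  have hrange : Set.range g = {m}ᶜ := by
    simpa using congrArg (fun s : Finset (Fin (n + 1)) => (s : Set (Fin (n + 1)))ᶜ) hm
  exact ⟨m, (hg.range_inj (Fin.strictMono_succAbove m)).mp
    (hrange.trans (Fin.range_succAbove m).symm)⟩

theorem containsPat_iff_exists_succAbove {σ : Fin (n + 1) → α} {p : Fin n → β} :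
    ContainsPat σ p ↔ ∃ m : Fin (n + 1), ∀ a b : Fin n,
      σ (m.succAbove a) < σ (m.succAbove b) ↔ p a < p b := by
  constructor
  · rintro ⟨g, hg, hiso⟩
    obtain ⟨m, rfl⟩ := exists_eq_succAbove_of_strictMono hg
    exact ⟨m, hiso⟩
  · rintro ⟨m, hiso⟩
    exact ⟨m.succAbove, Fin.strictMono_succAbove m, hiso⟩

instance ContainsPat.instDecidable (σ : Fin (n + 1) → α) (p : Fin n → β) :
    Decidable (ContainsPat σ p) :=
  decidable_of_iff' _ containsPat_iff_exists_succAbove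

/-- The partial permutation of length `n + 1` whose only hole is at position `h` and whose other
entries read `τ`. It is a bijection onto `Option (Fin n)`, the hole being the preimage of `none`. -/
def oneHole (h : Fin (n + 1)) (τ : Equiv.Perm (Fin n)) : Fin (n + 1) ≃ Option (Fin n) :=
  (finSuccEquiv' h).trans τ.optionCongr

/-- The extension of `oneHole h τ` with value `v` at the hole: the entries of `τ` that are at least
`v` are shifted up by one to make room. -/
def fillHole (h : Fin (n + 1)) (τ : Equiv.Perm (Fin n)) (v : Fin (n + 1)) :
    Equiv.Perm (Fin (n + 1)) :=
  (oneHole h τ).trans (finSuccEquiv' v).symm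

variable (h : Fin (n + 1)) (τ : Equiv.Perm (Fin n))

@[simp]
theorem oneHole_self : oneHole h τ h = none := by
  simp [oneHole]

@[simp]
theorem oneHole_succAbove (a : Fin n) : oneHole h τ (h.succAbove a) = some (τ a) := by
  simp [oneHole]

@[simp]
theorem fillHole_self (v : Fin (n + 1)) : fillHole h τ v h = v := by
  simp [fillHole]

@[simp]
theorem fillHole_succAbove (v : Fin (n + 1)) (a : Fin n) :
    fillHole h τ v (h.succAbove a) = v.succAbove (τ a) := by
  simp [fillHole]

theorem oneHole_injective : Function.Injective (oneHole h) := fun τ τ' heq =>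
  Equiv.ext fun a => by
    simpa only [oneHole_succAbove, Option.some_inj] using DFunLike.congr_fun heq (h.succAbove a)

variable {h τ}

theorem isPPermH_singleton_iff_bijective {π : Fin (n + 1) → Option (Fin n)} :
    IsPPermH {h} π ↔ Function.Bijective π ∧ π h = none := by
  rw [Function.bijective_iff_existsUnique, Option.forall]
  constructor
  · rintro ⟨hhole, hvalue⟩
    have hh : π h = none := (hhole h).mpr (mem_singleton_self h)
    exact ⟨⟨⟨h, hh, fun i hi => mem_singleton.mp ((hhole i).mp hi)⟩, hvalue⟩, hh⟩
  · rintro ⟨⟨hnone, hvalue⟩, hh⟩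
    refine ⟨fun i => ?_, hvalue⟩
    rw [mem_singleton]
    exact ⟨fun hi => hnone.unique hi hh, fun hi => hi ▸ hh⟩

theorem isPPermH_singleton_iff_exists_oneHole {π : Fin (n + 1) → Option (Fin n)} :
    IsPPermH {h} π ↔ ∃ τ : Equiv.Perm (Fin n), oneHole h τ = π := by
  rw [isPPermH_singleton_iff_bijective]
  constructor
  · rintro ⟨hπ, hh⟩
    let e : Equiv.Perm (Option (Fin n)) := (finSuccEquiv' h).symm.trans (Equiv.ofBijective π hπ)
    have he : e none = none := hh
    refine ⟨e.removeNone, funext fun i => ?_⟩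
    have hcongr : e.removeNone.optionCongr = e := by
      rw [map_equiv_removeNone, he, Equiv.swap_self, ← Equiv.Perm.one_def, one_mul]
    simp [oneHole, hcongr, e]
  · rintro ⟨τ, rfl⟩
    exact ⟨(oneHole h τ).bijective, oneHole_self h τ⟩

theorem isExtension_fillHole (v : Fin (n + 1)) : IsExtension (fillHole h τ v) (oneHole h τ) := by
  intro i j a b hi hj
  rcases Fin.eq_self_or_eq_succAbove h i with rfl | ⟨i, rfl⟩
  · simp at hi
  rcases Fin.eq_self_or_eq_succAbove h j with rfl | ⟨j, rfl⟩
  · simp at hj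
  rw [oneHole_succAbove, Option.some_inj] at hi hj
  rw [fillHole_succAbove, fillHole_succAbove, hi, hj, Fin.succAbove_lt_succAbove_iff]

theorem eq_fillHole_of_isExtension {σ : Equiv.Perm (Fin (n + 1))}
    (hσ : IsExtension σ (oneHole h τ)) : σ = fillHole h τ (σ h) := by
  have hmono : StrictMono fun a => σ (h.succAbove (τ.symm a)) := fun a b hab =>
    (hσ _ _ a b (by simp) (by simp)).mpr hab
  obtain ⟨v, hv⟩ := exists_eq_succAbove_of_strictMono hmono
  have hsucc (a : Fin n) : σ (h.succAbove a) = v.succAbove (τ a) := by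
    simpa using congrFun hv (τ a)
  have hself : σ h = v := by
    by_contra hne
    obtain ⟨a, ha⟩ := Fin.exists_succAbove_eq hne
    have hpos : h.succAbove (τ.symm a) = h := σ.injective (by rw [hsucc, τ.apply_symm_apply, ha])
    exact Fin.succAbove_ne h _ hpos
  ext1 i
  rcases Fin.eq_self_or_eq_succAbove h i with rfl | ⟨a, rfl⟩
  · rw [fillHole_self]
  · rw [fillHole_succAbove, hsucc, hself]

theorem ppAvoids_oneHole_iff {p : Fin ℓ → β} :
    PPAvoids (oneHole h τ) p ↔ ∀ v, ¬ ContainsPat (fillHole h τ v) p := by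
  refine ⟨fun havoid v => havoid _ (isExtension_fillHole v), fun hfill σ hσ => ?_⟩
  rw [eq_fillHole_of_isExtension hσ]
  exact hfill (σ h)

theorem snH_singleton (h : Fin (n + 1)) (p : Fin ℓ → Fin ℓ) :
    snH {h} p = Nat.card {τ : Equiv.Perm (Fin n) // ∀ v, ¬ ContainsPat (fillHole h τ v) p} := by
  let toAvoider (τ : {τ : Equiv.Perm (Fin n) // ∀ v, ¬ ContainsPat (fillHole h τ v) p}) :
      {π : Fin (n + 1) → Option (Fin n) // IsPPermH {h} π ∧ PPAvoids π p} :=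
    ⟨oneHole h τ, isPPermH_singleton_iff_exists_oneHole.mpr ⟨τ, rfl⟩,
      ppAvoids_oneHole_iff.mpr τ.2⟩
  refine (Nat.card_eq_of_bijective toAvoider ⟨fun τ τ' heq => ?_, ?_⟩).symm
  · exact Subtype.ext (oneHole_injective h (DFunLike.coe_injective (congrArg Subtype.val heq)))
  · rintro ⟨π, hπ, havoid⟩
    obtain ⟨τ, rfl⟩ := isPPermH_singleton_iff_exists_oneHole.mp hπ
    exact ⟨⟨τ, ppAvoids_oneHole_iff.mp havoid⟩, rfl⟩

theorem snH_singleton_eq_card_filter (h : Fin (n + 1)) (p : Fin n → Fin n) :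
    snH {h} p = #{τ : Equiv.Perm (Fin n) | ∀ v, ¬ ContainsPat (fillHole h τ v) p} := by
  rw [snH_singleton, Nat.card_eq_fintype_card, Fintype.card_subtype]

end OneHole

/-- The patterns `1342` and `2431` are not strongly 1-Wilf equivalent:
for `n = 5` and hole set `H = {2}` (position 2, i.e. index 1), there are 13
avoiders of `1342` but 14 avoiders of `2431`. Nevertheless, a partial
permutation avoids `1342` iff its reverse avoids `2431`, so the two patterns
are `k`-Wilf equivalent for every `k`. -/
theorem not_strongly_wilf_1342_2431 :
    snH ({1} : Finset (Fin 5)) (![0, 2, 3, 1] : Fin 4 → Fin 4) = 13 ∧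
    snH ({1} : Finset (Fin 5)) (![1, 3, 2, 0] : Fin 4 → Fin 4) = 14 ∧
    (∀ (n : ℕ) (α : Type) [LinearOrder α] (π : Fin n → Option α),
      PPAvoids π (![0, 2, 3, 1] : Fin 4 → Fin 4) ↔
        PPAvoids (fun t : Fin n => π t.rev) (![1, 3, 2, 0] : Fin 4 → Fin 4)) ∧
    (∀ k n : ℕ,
      snk n k (![0, 2, 3, 1] : Fin 4 → Fin 4) =
        snk n k (![1, 3, 2, 0] : Fin 4 → Fin 4)) := by
  have hrev : (![1, 3, 2, 0] : Fin 4 → Fin 4) = ![0, 2, 3, 1] ∘ Fin.rev := by decide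
  refine ⟨?_, ?_, fun n α _ π => ?_, fun k n => ?_⟩
  · rw [snH_singleton_eq_card_filter]
    decide +kernel
  · rw [snH_singleton_eq_card_filter]
    decide +kernel
  · rw [hrev]
    exact ppAvoids_comp_rev_iff.symm
  · rw [hrev, snk_comp_rev]
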